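/- arXiv:0904.4199 — 2 statements merged into one kernel-verified Lean document; each statement's English description precedes it below -/
import Mathlib

section
/- Let L > 0 and let f, g : (−L, L) → ℝ be measurable functions with 0 ≤ sign(ξ)·f(ξ) ≤ 1 and 0 ≤ sign(ξ)·g(ξ) ≤ 1 for a.e. ξ. If ∫_{−L}^{L} 1_{{f(ξ) ≥ g(ξ)}} · [(𝓜f(ξ) − 𝓜g(ξ)) − (f(ξ) − g(ξ))] dξ = 0, then either f(ξ) ≤ g(ξ) for a.e. ξ ∈ (−L, L) or f(ξ) ≥ g(ξ) for a.e. ξ ∈ (−L, L); in the first case 𝓜f(ξ) ≤ 𝓜g(ξ) for every ξ, and in the second case 𝓜f(ξ) ≥ 𝓜g(ξ) for every ξ. -/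
/-!
Write `u = ∫ f`, `v = ∫ g`, `D = 𝓜f - 𝓜g` and `d = f - g`. Since `M(u, ξ)` is nondecreasing in `u`,
the difference `D` has the constant sign of `u - v`.

* If `u ≤ v`, then `D ≤ 0`, so `1_{d ≥ 0} (D - d)` is nonpositive with zero integral, hence vanishes
  a.e.; where `d ≥ 0` this gives `d = D ≤ 0`, so `f ≤ g` a.e.
* If `v ≤ u`, then `D ≥ 0`. The bounds on `f` and `g` give `|u|, |v| ≤ L`, so `∫ M(u, ·) = u` and
  `∫ M(v, ·) = v`, whence `∫ (D - d) = 0` and therefore `∫ 1_{d < 0} (D - d) = 0`. This integrand is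
  nonnegative, and positive where `d < 0`, so `g ≤ f` a.e.
-/


open MeasureTheory Set Filter

/-- The Maxwellian `M(u, ξ)`: equals `1` on `0 < ξ < u`, `-1` on `u < ξ < 0`, `0` otherwise. -/
noncomputable def Mfun (u ξ : ℝ) : ℝ :=
  if 0 < ξ ∧ ξ < u then 1 else if u < ξ ∧ ξ < 0 then -1 else 0

/-- The projection `𝓜 f = M(u_f, ·)` with `u_f = ∫_{-L}^{L} f`. -/
noncomputable def proj (L : ℝ) (f : ℝ → ℝ) (ξ : ℝ) : ℝ :=
  Mfun (∫ ζ in (-L)..L, f ζ) ξ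

theorem Mfun_mono {u v : ℝ} (h : u ≤ v) (ξ : ℝ) : Mfun u ξ ≤ Mfun v ξ := by
  unfold Mfun
  split_ifs <;> grind

theorem Mfun_eq_indicator (u : ℝ) :
    Mfun u = fun ξ => (Ioo 0 u).indicator (fun _ => (1 : ℝ)) ξ
      - (Ioo u 0).indicator (fun _ => (1 : ℝ)) ξ := by
  funext ξ
  simp only [Mfun, indicator, mem_Ioo]
  split_ifs <;> grind

theorem integrable_Mfun (u : ℝ) : Integrable (Mfun u) := by
  rw [Mfun_eq_indicator]
  refine Integrable.sub ?_ ?_ <;>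
  · rw [integrable_indicator_iff measurableSet_Ioo]
    exact integrableOn_const (by simp)

/-- The Maxwellian reproduces its density, as long as its support lies in `[-L, L]`. -/
theorem integral_Mfun {L u : ℝ} (h1 : -L ≤ u) (h2 : u ≤ L) :
    ∫ ξ in Ioo (-L) L, Mfun u ξ = u := by
  have hsub : ∀ ξ, ξ ∉ Ioo (-L) L → Mfun u ξ = 0 := by
    intro ξ h
    simp only [mem_Ioo] at h
    unfold Mfun
    split_ifs <;> grind
  rw [setIntegral_eq_integral_of_forall_compl_eq_zero hsub, Mfun_eq_indicator, integral_sub]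
  · rw [integral_indicator measurableSet_Ioo, integral_indicator measurableSet_Ioo]
    rcases le_total 0 u with h | h <;> simp [h]
  all_goals
    rw [integrable_indicator_iff measurableSet_Ioo]
    exact integrableOn_const (by simp)

/-- A function obeying the sign constraint lies between the extreme Maxwellians `M(-L, ·)` and
`M(L, ·)`. The point `ξ = 0`, where `sign ξ = 0` and the constraint is void, is discarded. -/
theorem ae_between {L : ℝ} {f : ℝ → ℝ}
    (hbf : ∀ᵐ ξ ∂(volume.restrict (Ioo (-L) L)),
      0 ≤ Real.sign ξ * f ξ ∧ Real.sign ξ * f ξ ≤ 1) :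
    ∀ᵐ ξ ∂(volume.restrict (Ioo (-L) L)), Mfun (-L) ξ ≤ f ξ ∧ f ξ ≤ Mfun L ξ := by
  have h0 : ∀ᵐ ξ ∂(volume.restrict (Ioo (-L) L)), ξ ≠ (0 : ℝ) :=
    ae_restrict_of_ae (Measure.ae_ne volume 0)
  filter_upwards [hbf, h0, ae_restrict_mem measurableSet_Ioo] with ξ h h0 hm
  rcases lt_or_gt_of_ne h0 with hξ | hξ
  · rw [Real.sign_of_neg hξ] at h
    simp only [mem_Ioo] at hm
    unfold Mfun
    split_ifs <;> grind
  · rw [Real.sign_of_pos hξ] at h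
    simp only [mem_Ioo] at hm
    unfold Mfun
    split_ifs <;> grind

theorem integrable_of_between {L : ℝ} {f : ℝ → ℝ} (hf : Measurable f)
    (h : ∀ᵐ ξ ∂(volume.restrict (Ioo (-L) L)), Mfun (-L) ξ ≤ f ξ ∧ f ξ ≤ Mfun L ξ) :
    IntegrableOn f (Ioo (-L) L) :=
  integrable_of_le_of_le hf.aestronglyMeasurable (h.mono fun _ h => h.1) (h.mono fun _ h => h.2)
    (integrable_Mfun _).integrableOn (integrable_Mfun _).integrableOn

theorem integral_mem_of_between {L : ℝ} (hL : 0 < L) {f : ℝ → ℝ} (hf : Measurable f)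
    (h : ∀ᵐ ξ ∂(volume.restrict (Ioo (-L) L)), Mfun (-L) ξ ≤ f ξ ∧ f ξ ≤ Mfun L ξ) :
    -L ≤ ∫ ξ in Ioo (-L) L, f ξ ∧ ∫ ξ in Ioo (-L) L, f ξ ≤ L := by
  have hi := integrable_of_between hf h
  constructor
  · calc -L = ∫ ξ in Ioo (-L) L, Mfun (-L) ξ := (integral_Mfun le_rfl (by linarith)).symm
      _ ≤ _ := integral_mono_ae (integrable_Mfun _).integrableOn hi (h.mono fun _ h => h.1)
  · calc _ ≤ ∫ ξ in Ioo (-L) L, Mfun L ξ :=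
          integral_mono_ae hi (integrable_Mfun _).integrableOn (h.mono fun _ h => h.2)
      _ = L := integral_Mfun (by linarith) le_rfl

theorem stmt6 (L : ℝ) (hL : 0 < L) (f g : ℝ → ℝ)
    (hf : Measurable f) (hg : Measurable g)
    (hbf : ∀ᵐ ξ ∂(volume.restrict (Set.Ioo (-L) L)),
      0 ≤ Real.sign ξ * f ξ ∧ Real.sign ξ * f ξ ≤ 1)
    (hbg : ∀ᵐ ξ ∂(volume.restrict (Set.Ioo (-L) L)),
      0 ≤ Real.sign ξ * g ξ ∧ Real.sign ξ * g ξ ≤ 1)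
    (heq : (∫ ξ in (-L)..L,
      if g ξ ≤ f ξ then (proj L f ξ - proj L g ξ) - (f ξ - g ξ) else 0) = 0) :
    ((∀ᵐ ξ ∂(volume.restrict (Set.Ioo (-L) L)), f ξ ≤ g ξ) ∧
      ∀ ξ, proj L f ξ ≤ proj L g ξ) ∨
    ((∀ᵐ ξ ∂(volume.restrict (Set.Ioo (-L) L)), g ξ ≤ f ξ) ∧
      ∀ ξ, proj L g ξ ≤ proj L f ξ) := by
  have hI : ∀ h : ℝ → ℝ, ∫ ξ in (-L)..L, h ξ = ∫ ξ in Ioo (-L) L, h ξ := fun h => by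
    rw [intervalIntegral.integral_of_le (by linarith), integral_Ioc_eq_integral_Ioo]
  have hf' := ae_between hbf
  have hg' := ae_between hbg
  have hfi := integrable_of_between hf hf'
  have hgi := integrable_of_between hg hg'
  obtain ⟨hu1, hu2⟩ := integral_mem_of_between hL hf hf'
  obtain ⟨hv1, hv2⟩ := integral_mem_of_between hL hg hg'
  unfold proj at heq ⊢
  rw [hI] at heq
  simp only [hI] at heq ⊢
  set u := ∫ ξ in Ioo (-L) L, f ξ with hu
  set v := ∫ ξ in Ioo (-L) L, g ξ with hv
  have hDi : IntegrableOn (fun ξ => Mfun u ξ - Mfun v ξ) (Ioo (-L) L) :=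
    ((integrable_Mfun u).sub (integrable_Mfun v)).integrableOn
  have hdi : IntegrableOn (fun ξ => f ξ - g ξ) (Ioo (-L) L) := hfi.sub hgi
  have hFi : IntegrableOn (fun ξ => (Mfun u ξ - Mfun v ξ) - (f ξ - g ξ)) (Ioo (-L) L) :=
    hDi.sub hdi
  have hPi : IntegrableOn (fun ξ => if g ξ ≤ f ξ then
      (Mfun u ξ - Mfun v ξ) - (f ξ - g ξ) else 0) (Ioo (-L) L) := by
    have := Integrable.indicator hFi (measurableSet_le hg hf)
    exact this.congr (Eventually.of_forall fun ξ => by simp [indicator])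
  rcases le_total u v with huv | huv
  · refine Or.inl ⟨?_, Mfun_mono huv⟩
    have hneg := integral_neg (μ := volume.restrict (Ioo (-L) L)) (fun ξ => if g ξ ≤ f ξ then
      (Mfun u ξ - Mfun v ξ) - (f ξ - g ξ) else 0)
    rw [heq, neg_zero] at hneg
    have hnn : 0 ≤ -fun ξ => if g ξ ≤ f ξ then (Mfun u ξ - Mfun v ξ) - (f ξ - g ξ) else 0 := by
      intro ξ
      have hm := Mfun_mono huv ξ
      simp only [Pi.zero_apply, Pi.neg_apply]
      split_ifs <;> linarith
    filter_upwards [(integral_eq_zero_iff_of_nonneg hnn hPi.neg).1 hneg] with ξ hξ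
    have hm := Mfun_mono huv ξ
    simp only [Pi.zero_apply, Pi.neg_apply] at hξ
    split_ifs at hξ <;> linarith
  · refine Or.inr ⟨?_, Mfun_mono huv⟩
    have htot : ∫ ξ in Ioo (-L) L, ((Mfun u ξ - Mfun v ξ) - (f ξ - g ξ)) = 0 := by
      rw [integral_sub hDi hdi, integral_sub hfi hgi,
        integral_sub (integrable_Mfun u).integrableOn (integrable_Mfun v).integrableOn,
        integral_Mfun hu1 hu2, integral_Mfun hv1 hv2, ← hu, ← hv, sub_self]
    -- The integral over `{f < g}` is the total integral minus the one over `{g ≤ f}`.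
    have hrest := integral_sub hFi hPi
    rw [htot, heq, sub_zero] at hrest
    have hnn : 0 ≤ (fun ξ => (Mfun u ξ - Mfun v ξ) - (f ξ - g ξ)) -
        fun ξ => if g ξ ≤ f ξ then (Mfun u ξ - Mfun v ξ) - (f ξ - g ξ) else 0 := by
      intro ξ
      have hm := Mfun_mono huv ξ
      simp only [Pi.zero_apply, Pi.sub_apply]
      split_ifs <;> linarith
    filter_upwards [(integral_eq_zero_iff_of_nonneg hnn (hFi.sub hPi)).1 hrest] with ξ hξ
    have hm := Mfun_mono huv ξ
    simp only [Pi.zero_apply, Pi.sub_apply] at hξ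
    split_ifs at hξ <;> linarith
end

section
/- Let F be a layer solution with data (V, g). Then for every y ≥ 0 the entropy dissipation D(y) := ∫_{−L}^{L} (−ξ)·(𝓜F(y,·)(ξ) − F(y, ξ)) dξ is nonnegative, and ∫_0^∞ D(y) dy ≤ 2L³/3. -/
/-!
Nonnegativity: with `u = ∫ F(y, ·)` the Maxwellian satisfies `(u - ξ) (M(u, ξ) - F) ≥ 0` pointwise,
because of the sign bounds on `F` (`mfun_entropy`). As `|u| ≤ L`, the functions `M(u, ·)` and
`F(y, ·)` have the same integral `u` (`integral_mfun`), so integrating this inequality gives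
`D y ≥ 0`.

Integral bound: by the equation, `∂_y (ξ² F) = ξ (M - F)`. Integrating in `y` over `(0, Y)`, then in
`ξ`, and exchanging the integrals, `∫₀^Y D = ∫ ξ² (F(0, ξ) - F(Y, ξ)) dξ`. Both values of `F` lie in
`[0, 1]` or both lie in `[-1, 0]`, so their difference is at most `1`, and
`∫₀^Y D ≤ ∫ ξ² dξ = 2 L³ / 3` for every `Y`. Since `D ≥ 0`, this yields integrability
on `(0, ∞)` and the bound there.
-/

open MeasureTheory Set Filter

/-- A layer solution with data `(V, g)`: `F : [0,∞) × (-L,L) → ℝ` measurable, with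
`0 ≤ sign ξ · F(y,ξ) ≤ 1`; for each `ξ ≠ 0`, `y ↦ F(y,ξ)` is continuous on `[0,∞)`,
differentiable on `(0,∞)` with `ξ ∂_y F = M(u(y),ξ) - F`, `u(y) = ∫_{-L}^L F(y,·)`;
`F(0,ξ) = g(ξ)` on `(0,L)`; and `∫_{-L}^L ξ F(y,ξ) dξ = V` for all `y ≥ 0`. -/
structure IsLayerSolution (L V : ℝ) (g : ℝ → ℝ) (F : ℝ → ℝ → ℝ) : Prop where
  meas : Measurable (Function.uncurry F)
  sgnBound : ∀ y ξ, 0 ≤ y → ξ ∈ Set.Ioo (-L) L →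
    0 ≤ Real.sign ξ * F y ξ ∧ Real.sign ξ * F y ξ ≤ 1
  cont : ∀ ξ ∈ Set.Ioo (-L) L, ξ ≠ 0 → ContinuousOn (fun y => F y ξ) (Set.Ici 0)
  eqn : ∀ ξ ∈ Set.Ioo (-L) L, ξ ≠ 0 → ∀ y : ℝ, 0 < y →
    ∃ d : ℝ, HasDerivAt (fun z => F z ξ) d y ∧
      ξ * d = Mfun (∫ ζ in (-L)..L, F y ζ) ξ - F y ξ
  bdry : ∀ ξ ∈ Set.Ioo (0 : ℝ) L, F 0 ξ = g ξ
  flux : ∀ y : ℝ, 0 ≤ y → (∫ ξ in (-L)..L, ξ * F y ξ) = V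

/-! ### Maxwellians -/

lemma mfun_of_nonneg {u : ℝ} (hu : 0 ≤ u) : Mfun u = (Ioo 0 u).indicator (fun _ => 1) := by
  funext ξ
  by_cases h : 0 < ξ ∧ ξ < u
  · simp [Mfun, h]
  · have h2 : ¬ (u < ξ ∧ ξ < 0) := by rintro ⟨a, b⟩; linarith
    rw [indicator_of_notMem (by simpa using h)]
    simp only [Mfun, if_neg h, if_neg h2]

lemma mfun_of_nonpos {u : ℝ} (hu : u ≤ 0) : Mfun u = (Ioo u 0).indicator (fun _ => -1) := by
  funext ξ
  have h2 : ¬ (0 < ξ ∧ ξ < u) := by rintro ⟨a, b⟩; linarith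
  by_cases h : u < ξ ∧ ξ < 0
  · rw [indicator_of_mem (by simpa using h)]
    simp only [Mfun, if_neg h2, if_pos h]
  · rw [indicator_of_notMem (by simpa using h)]
    simp only [Mfun, if_neg h, if_neg h2]

lemma measurable_mfun : Measurable (fun p : ℝ × ℝ => Mfun p.1 p.2) := by
  unfold Mfun
  refine Measurable.ite ?_ measurable_const (Measurable.ite ?_ measurable_const measurable_const)
  · exact (measurableSet_lt measurable_const measurable_snd).inter
      (measurableSet_lt measurable_snd measurable_fst)
  · exact (measurableSet_lt measurable_fst measurable_snd).inter
      (measurableSet_lt measurable_snd measurable_const)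

lemma abs_mfun_le (u ξ : ℝ) : |Mfun u ξ| ≤ 1 := by
  unfold Mfun
  split_ifs <;> simp

lemma integral_mfun {L u : ℝ} (hL : 0 < L) (hu : u ∈ Icc (-L) L) :
    (∫ ξ in (-L)..L, Mfun u ξ) = u := by
  obtain ⟨h1, h2⟩ := hu
  rw [intervalIntegral.integral_of_le (by linarith)]
  rcases le_total 0 u with h | h
  · rw [mfun_of_nonneg h, setIntegral_indicator measurableSet_Ioo,
      inter_eq_right.2 (show Ioo 0 u ⊆ Ioc (-L) L from
        fun x hx => ⟨by linarith [hx.1], by linarith [hx.2]⟩)]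
    simp [h]
  · rw [mfun_of_nonpos h, setIntegral_indicator measurableSet_Ioo,
      inter_eq_right.2 (show Ioo u 0 ⊆ Ioc (-L) L from
        fun x hx => ⟨by linarith [hx.1], by linarith [hx.2]⟩)]
    simp [h]

/-- Pointwise form of the entropy-minimising property of the Maxwellian. -/
lemma mfun_entropy {u ξ f : ℝ} (hpos : 0 < ξ → 0 ≤ f ∧ f ≤ 1) (hneg : ξ < 0 → -1 ≤ f ∧ f ≤ 0)
    (h0 : ξ ≠ 0) : 0 ≤ (u - ξ) * (Mfun u ξ - f) := by
  unfold Mfun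
  rcases lt_or_gt_of_ne h0 with h | h
  · obtain ⟨a, b⟩ := hneg h
    rw [if_neg (fun k => absurd k.1 (not_lt.2 h.le))]
    split_ifs with k
    · exact mul_nonneg_of_nonpos_of_nonpos (by linarith [k.1]) (by linarith)
    · have : ξ ≤ u := by by_contra! k'; exact k ⟨k', h⟩
      exact mul_nonneg (by linarith) (by linarith)
  · obtain ⟨a, b⟩ := hpos h
    rw [if_neg (c := u < ξ ∧ ξ < 0) (fun k => absurd k.2 (not_lt.2 h.le))]
    split_ifs with k
    · exact mul_nonneg (by linarith [k.2]) (by linarith)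
    · have : u ≤ ξ := by by_contra! k'; exact k ⟨h, k'⟩
      exact mul_nonneg_of_nonpos_of_nonpos (by linarith) (by linarith)

/-! ### Bounds and integrability of slices -/

lemma ae_mem_ne (L : ℝ) :
    ∀ᵐ ξ ∂(volume.restrict (Ioc (-L) L)), ξ ∈ Ioo (-L) L ∧ ξ ≠ 0 := by
  rw [ae_restrict_iff' measurableSet_Ioc]
  filter_upwards [Measure.ae_ne volume L, Measure.ae_ne volume (0 : ℝ)] with ξ h1 h2 h3
  exact ⟨⟨h3.1, lt_of_le_of_ne h3.2 h1⟩, h2⟩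

namespace IsLayerSolution

variable {L V : ℝ} {g : ℝ → ℝ} {F : ℝ → ℝ → ℝ}

lemma bound_pos (hF : IsLayerSolution L V g F) {y ξ : ℝ} (hy : 0 ≤ y) (hξ : ξ ∈ Ioo (-L) L)
    (h : 0 < ξ) : 0 ≤ F y ξ ∧ F y ξ ≤ 1 := by
  have := hF.sgnBound y ξ hy hξ
  rwa [Real.sign_of_pos h, one_mul] at this

lemma bound_neg (hF : IsLayerSolution L V g F) {y ξ : ℝ} (hy : 0 ≤ y) (hξ : ξ ∈ Ioo (-L) L)
    (h : ξ < 0) : -1 ≤ F y ξ ∧ F y ξ ≤ 0 := by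
  have := hF.sgnBound y ξ hy hξ
  rw [Real.sign_of_neg h] at this
  constructor <;> linarith [this.1, this.2]

lemma abs_le_one (hF : IsLayerSolution L V g F) {y ξ : ℝ} (hy : 0 ≤ y) (hξ : ξ ∈ Ioo (-L) L)
    (h : ξ ≠ 0) : |F y ξ| ≤ 1 := by
  rw [abs_le]
  rcases lt_or_gt_of_ne h with h | h
  · have := hF.bound_neg hy hξ h
    constructor <;> linarith [this.1, this.2]
  · have := hF.bound_pos hy hξ h
    constructor <;> linarith [this.1, this.2]

lemma measurable_slice (hF : IsLayerSolution L V g F) (y : ℝ) : Measurable (F y) :=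
  hF.meas.comp (measurable_const.prodMk measurable_id)

lemma integrable_slice (hF : IsLayerSolution L V g F) {y : ℝ} (hy : 0 ≤ y) :
    Integrable (F y) (volume.restrict (Ioc (-L) L)) := by
  refine Integrable.of_bound (hF.measurable_slice y).aestronglyMeasurable 1 ?_
  filter_upwards [ae_mem_ne L] with ξ hξ
  exact hF.abs_le_one hy hξ.1 hξ.2

end IsLayerSolution

lemma measurable_mfun_slice (u : ℝ) : Measurable (Mfun u) :=
  measurable_mfun.comp (measurable_const.prodMk measurable_id)

lemma integrable_mfun (L u : ℝ) : Integrable (Mfun u) (volume.restrict (Ioc (-L) L)) := by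
  refine Integrable.of_bound (measurable_mfun_slice u).aestronglyMeasurable 1 ?_
  exact Eventually.of_forall fun ξ => abs_mfun_le u ξ

namespace IsLayerSolution

variable {L V : ℝ} {g : ℝ → ℝ} {F : ℝ → ℝ → ℝ}

/-- The density takes values in `[-L, L]`, by comparing `F(y, ·)` with the extreme
Maxwellians `M(±L, ·)`. -/
lemma density_mem (hL : 0 < L) (hF : IsLayerSolution L V g F) {y : ℝ} (hy : 0 ≤ y) :
    (∫ ζ in (-L)..L, F y ζ) ∈ Icc (-L) L := by
  have e1 := integral_mfun hL (u := L) ⟨by linarith, le_rfl⟩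
  have e2 := integral_mfun hL (u := -L) ⟨le_rfl, by linarith⟩
  rw [intervalIntegral.integral_of_le (by linarith)] at e1 e2 ⊢
  constructor
  · refine e2.symm.le.trans ?_
    refine integral_mono_ae (integrable_mfun L _) (hF.integrable_slice hy) ?_
    filter_upwards [ae_mem_ne L] with ξ ⟨hξ, h0⟩
    rcases lt_or_gt_of_ne h0 with h | h
    · have : Mfun (-L) ξ = -1 := by
        rw [mfun_of_nonpos (by linarith), indicator_of_mem (mem_Ioo.2 ⟨hξ.1, h⟩)]
      rw [this]
      exact (hF.bound_neg hy hξ h).1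
    · have : Mfun (-L) ξ = 0 := by
        rw [mfun_of_nonpos (by linarith), indicator_of_notMem (fun k => by linarith [k.2])]
      rw [this]
      exact (hF.bound_pos hy hξ h).1
  · refine le_trans ?_ e1.le
    refine integral_mono_ae (hF.integrable_slice hy) (integrable_mfun L L) ?_
    filter_upwards [ae_mem_ne L] with ξ ⟨hξ, h0⟩
    rcases lt_or_gt_of_ne h0 with h | h
    · have : Mfun L ξ = 0 := by
        rw [mfun_of_nonneg (by linarith), indicator_of_notMem (fun k => by linarith [k.1])]
      rw [this]
      exact (hF.bound_neg hy hξ h).2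
    · have : Mfun L ξ = 1 := by
        rw [mfun_of_nonneg (by linarith), indicator_of_mem (mem_Ioo.2 ⟨h, hξ.2⟩)]
      rw [this]
      exact (hF.bound_pos hy hξ h).2

/-! ### Nonnegativity of the dissipation -/

lemma dissipation_nonneg (hL : 0 < L) (hF : IsLayerSolution L V g F) {y : ℝ} (hy : 0 ≤ y) :
    0 ≤ ∫ ξ in (-L)..L, (-ξ) * (proj L (F y) ξ - F y ξ) := by
  have hu := hF.density_mem hL hy
  unfold proj
  set u := ∫ ζ in (-L)..L, F y ζ with hudef
  have eM := integral_mfun hL hu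
  rw [intervalIntegral.integral_of_le (by linarith)] at hudef eM ⊢
  have iM := integrable_mfun L u
  have iF := hF.integrable_slice hy
  have iD : Integrable (fun ξ => Mfun u ξ - F y ξ) (volume.restrict (Ioc (-L) L)) := iM.sub iF
  have iD' : Integrable (fun ξ => (-ξ) * (Mfun u ξ - F y ξ)) (volume.restrict (Ioc (-L) L)) := by
    refine iD.bdd_mul (c := L) (by fun_prop) ?_
    filter_upwards [ae_mem_ne L] with ξ ⟨hξ, _⟩
    rw [norm_neg, Real.norm_eq_abs, abs_le]
    exact ⟨hξ.1.le, hξ.2.le⟩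
  have e0 : ∫ ξ in Ioc (-L) L, (Mfun u ξ - F y ξ) = 0 := by
    rw [integral_sub iM iF, eM, ← hudef, sub_self]
  have key : 0 ≤ ∫ ξ in Ioc (-L) L, (u * (Mfun u ξ - F y ξ) + (-ξ) * (Mfun u ξ - F y ξ)) := by
    refine integral_nonneg_of_ae ?_
    filter_upwards [ae_mem_ne L] with ξ ⟨hξ, h0⟩
    have := mfun_entropy (u := u) (hF.bound_pos hy hξ) (hF.bound_neg hy hξ) h0
    simp only [Pi.zero_apply]
    linarith
  rwa [integral_add (iD.const_mul u) iD', integral_const_mul, e0, mul_zero, zero_add] at key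

/-! ### Second-moment identity and the integral bound -/

lemma measurable_density (hF : IsLayerSolution L V g F) :
    Measurable (fun y => ∫ ζ in Ioc (-L) L, F y ζ) :=
  (hF.meas.stronglyMeasurable.integral_prod_right
    (ν := volume.restrict (Ioc (-L) L))).measurable

lemma measurable_integrand (hL : 0 < L) (hF : IsLayerSolution L V g F) :
    Measurable (fun p : ℝ × ℝ => (-p.2) * (proj L (F p.1) p.2 - F p.1 p.2)) := by
  have h : Measurable (fun p : ℝ × ℝ => proj L (F p.1) p.2) := by
    unfold proj
    simp_rw [intervalIntegral.integral_of_le (show -L ≤ L by linarith)]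
    exact measurable_mfun.comp ((hF.measurable_density.comp measurable_fst).prodMk measurable_snd)
  exact measurable_snd.neg.mul (h.sub hF.meas)

lemma abs_integrand_le (hF : IsLayerSolution L V g F) {y ξ : ℝ} (hy : 0 ≤ y)
    (hξ : ξ ∈ Ioo (-L) L) (h0 : ξ ≠ 0) :
    |(-ξ) * (proj L (F y) ξ - F y ξ)| ≤ L * 2 := by
  rw [abs_mul, abs_neg]
  have h1 : |ξ| ≤ L := abs_le.2 ⟨hξ.1.le, hξ.2.le⟩
  have h2 : |proj L (F y) ξ - F y ξ| ≤ 2 := by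
    have a : |proj L (F y) ξ| ≤ 1 := abs_mfun_le _ _
    have b := hF.abs_le_one hy hξ h0
    have c := abs_sub (proj L (F y) ξ) (F y ξ)
    linarith
  exact mul_le_mul h1 h2 (abs_nonneg _) ((abs_nonneg _).trans h1)

lemma integrable_integrand (hL : 0 < L) (hF : IsLayerSolution L V g F) (Y : ℝ) :
    Integrable (fun p : ℝ × ℝ => (-p.2) * (proj L (F p.1) p.2 - F p.1 p.2))
      ((volume.restrict (Ioc 0 Y)).prod (volume.restrict (Ioc (-L) L))) := by
  refine Integrable.of_bound (hF.measurable_integrand hL).aestronglyMeasurable (L * 2) ?_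
  have h1 : ∀ᵐ y ∂(volume.restrict (Ioc (0 : ℝ) Y)), 0 ≤ y := by
    filter_upwards [ae_restrict_mem measurableSet_Ioc] with y hy using hy.1.le
  filter_upwards [Measure.quasiMeasurePreserving_fst.ae h1,
    Measure.quasiMeasurePreserving_snd.ae (ae_mem_ne L)] with p hp1 hp2
  exact hF.abs_integrand_le hp1 hp2.1 hp2.2

/-- The second-moment identity for a single velocity: `ξ² F` decreases at rate
`-ξ (M - F)`. -/
lemma integral_integrand_slice (hL : 0 < L) (hF : IsLayerSolution L V g F) {Y ξ : ℝ} (hY : 0 ≤ Y)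
    (hξ : ξ ∈ Ioo (-L) L) (h0 : ξ ≠ 0) :
    (∫ y in Ioc 0 Y, (-ξ) * (proj L (F y) ξ - F y ξ)) = ξ ^ 2 * (F 0 ξ - F Y ξ) := by
  have hint : IntervalIntegrable (fun y => (-ξ) * (proj L (F y) ξ - F y ξ)) volume 0 Y := by
    rw [intervalIntegrable_iff_integrableOn_Ioc_of_le hY]
    refine Integrable.of_bound (((hF.measurable_integrand hL).comp
      (measurable_id.prodMk measurable_const)).aestronglyMeasurable) (L * 2) ?_
    filter_upwards [ae_restrict_mem measurableSet_Ioc] with y hy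
    exact hF.abs_integrand_le hy.1.le hξ h0
  have := intervalIntegral.integral_eq_sub_of_hasDerivAt_of_le (a := 0) (b := Y)
    (f := fun y => -ξ ^ 2 * F y ξ) hY
    (((hF.cont ξ hξ h0).mono Icc_subset_Ici_self).const_mul _) (fun y hy => ?_) hint
  · rw [intervalIntegral.integral_of_le hY] at this
    rw [this]
    ring
  · obtain ⟨d, hd, he⟩ := hF.eqn ξ hξ h0 y hy.1
    have h1 : (-ξ) * (proj L (F y) ξ - F y ξ) = -ξ ^ 2 * d := by
      unfold proj
      rw [← he]
      ring
    rw [h1]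
    exact hd.const_mul (-ξ ^ 2)

lemma integral_dissipation_le (hL : 0 < L) (hF : IsLayerSolution L V g F) {Y : ℝ} (hY : 0 ≤ Y) :
    (∫ y in Ioc 0 Y, ∫ ξ in Ioc (-L) L, (-ξ) * (proj L (F y) ξ - F y ξ)) ≤ 2 * L ^ 3 / 3 := by
  have iI := hF.integrable_integrand hL Y
  have iS : Integrable (fun ξ : ℝ => ξ ^ 2) (volume.restrict (Ioc (-L) L)) := by
    rw [← IntegrableOn, ← intervalIntegrable_iff_integrableOn_Ioc_of_le (by linarith)]
    exact (continuous_pow 2).intervalIntegrable _ _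
  rw [integral_integral_swap iI]
  calc _ ≤ ∫ ξ in Ioc (-L) L, ξ ^ 2 := by
        refine integral_mono_ae iI.integral_prod_right iS ?_
        filter_upwards [ae_mem_ne L] with ξ ⟨hξ, h0⟩
        change (∫ y in Ioc 0 Y, (-ξ) * (proj L (F y) ξ - F y ξ)) ≤ ξ ^ 2
        rw [hF.integral_integrand_slice hL hY hξ h0]
        -- `F 0 ξ` and `F Y ξ` lie in the same unit interval, according to the sign of `ξ`.
        have : F 0 ξ - F Y ξ ≤ 1 := by
          rcases lt_or_gt_of_ne h0 with h | h
          · linarith [(hF.bound_neg le_rfl hξ h).2, (hF.bound_neg hY hξ h).1]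
          · linarith [(hF.bound_pos le_rfl hξ h).2, (hF.bound_pos hY hξ h).1]
        nlinarith [sq_nonneg ξ]
    _ = 2 * L ^ 3 / 3 := by
        rw [← intervalIntegral.integral_of_le (by linarith), integral_pow]
        push_cast
        ring

end IsLayerSolution

theorem stmt11 (L V : ℝ) (hL : 0 < L) (g : ℝ → ℝ) (hgm : Measurable g)
    (hg01 : ∀ ξ ∈ Set.Ioo (0 : ℝ) L, g ξ ∈ Set.Icc (0 : ℝ) 1)
    (hV : V ∈ Set.Icc 0 (L ^ 2 / 2))
    (F : ℝ → ℝ → ℝ) (hF : IsLayerSolution L V g F)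
    (D : ℝ → ℝ)
    (hD : ∀ y : ℝ, 0 ≤ y →
      D y = ∫ ξ in (-L)..L, (-ξ) * (proj L (F y) ξ - F y ξ)) :
    (∀ y : ℝ, 0 ≤ y → 0 ≤ D y) ∧
    IntegrableOn D (Set.Ioi 0) ∧
    (∫ y in Set.Ioi (0 : ℝ), D y) ≤ 2 * L ^ 3 / 3 := by
  have hnn : ∀ y : ℝ, 0 ≤ y → 0 ≤ D y := fun y hy => by
    rw [hD y hy]
    exact hF.dissipation_nonneg hL hy
  have hD' : ∀ y : ℝ, 0 ≤ y →
      D y = ∫ ξ in Ioc (-L) L, (-ξ) * (proj L (F y) ξ - F y ξ) := fun y hy => by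
    rw [hD y hy, intervalIntegral.integral_of_le (by linarith)]
  have hint : ∀ Y : ℝ, IntegrableOn D (Ioc 0 Y) := fun Y =>
    (hF.integrable_integrand hL Y).integral_prod_left.congr <| by
      filter_upwards [ae_restrict_mem measurableSet_Ioc] with y hy using (hD' y hy.1.le).symm
  have hle : ∀ Y : ℝ, 0 ≤ Y → (∫ y in (0 : ℝ)..Y, D y) ≤ 2 * L ^ 3 / 3 := fun Y hY => by
    rw [intervalIntegral.integral_of_le hY,
      setIntegral_congr_fun measurableSet_Ioc fun y hy => hD' y hy.1.le]
    exact hF.integral_dissipation_le hL hY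
  have hI : IntegrableOn D (Ioi 0) := by
    refine integrableOn_Ioi_of_intervalIntegral_norm_bounded (l := atTop) (b := fun Y : ℝ => Y)
      (2 * L ^ 3 / 3) 0 hint tendsto_id ?_
    filter_upwards [eventually_ge_atTop 0] with Y hY
    rw [intervalIntegral.integral_congr (g := D)]
    · exact hle Y hY
    · intro y hy
      rw [uIcc_of_le hY] at hy
      exact Real.norm_of_nonneg (hnn y hy.1)
  refine ⟨hnn, hI, ?_⟩
  refine le_of_tendsto (intervalIntegral_tendsto_integral_Ioi 0 hI tendsto_id) ?_
  filter_upwards [eventually_ge_atTop 0] with Y hY using hle Y hY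
end
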